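/- Let G be an ample groupoid and X a locally compact Hausdorff space with an étale anchor map p : X → G^0 and a continuous left G-action that is free and proper. Then there is an isomorphism of abelian groups Z[X]_G ≅ Z[G\X], induced by the map sending f ∈ Z[X] to the function [x] ↦ Σ_{g ∈ G_{p(x)}} f(g·x) on the quotient G\X. -/

import Mathlib

noncomputable section

open Function Set

attribute [local instance] Classical.propDecidable

universe u v w

/-- `ℤ[Y]`: the set of compactly supported continuous `ℤ`-valued functions on a space `Y`
(`ℤ` carries the discrete topology). -/
def ccZ (Y : Type v) [TopologicalSpace Y] : Set (Y → ℤ) :=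
  {f | Continuous f ∧ HasCompactSupport f}

/-- `ℤ[Y]` as an additive subgroup of the group of all functions `Y → ℤ`. -/
def ccZSub (Y : Type v) [TopologicalSpace Y] : AddSubgroup (Y → ℤ) where
  carrier := ccZ Y
  add_mem' {a b} ha hb := ⟨ha.1.add hb.1, ha.2.add hb.2⟩
  zero_mem' := ⟨continuous_const, by
    have h : tsupport (0 : Y → ℤ) = ∅ := by simp [tsupport]
    unfold HasCompactSupport
    rw [h]; exact isCompact_empty⟩
  neg_mem' {a} ha := ⟨ha.1.neg, ha.2.neg⟩

@[simp] lemma mem_ccZSub {Y : Type v} [TopologicalSpace Y] (f : Y → ℤ) :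
    f ∈ ccZSub Y ↔ f ∈ ccZ Y := Iff.rfl

/-- The pushforward `φ_*(a)(y) = ∑_{x ∈ φ⁻¹(y)} a x` of a function along a map. -/
def pushf {X : Type v} {Y : Type w} (φ : X → Y) (a : X → ℤ) : Y → ℤ :=
  fun y => ∑ᶠ x ∈ φ ⁻¹' {y}, a x

/-- The generated equivalence relation. -/
inductive RelGen {α : Sort*} (r : α → α → Prop) : α → α → Prop
  | rel {x y} : r x y → RelGen r x y
  | refl (x) : RelGen r x x
  | symm {x y} : RelGen r x y → RelGen r y x
  | trans {x y z} : RelGen r x y → RelGen r y z → RelGen r x z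

/-- The purely algebraic data of a topological groupoid, with arrow space `G`:
the set of units, source and range maps (valued in units), a (junk-total)
partially defined composition, and inversion. -/
structure GroupoidData (G : Type u) where
  unitSpace : Set G
  source : G → G
  range : G → G
  mul : G → G → G
  inv : G → G

namespace GroupoidData

variable {G : Type u} (D : GroupoidData G)

/-- The product of two subsets of a groupoid. -/
def setMul (A B : Set G) : Set G :=
  {w | ∃ a ∈ A, ∃ b ∈ B, D.source a = D.range b ∧ w = D.mul a b}

/-- A bisection: a subset on which both the source and the range map are injective. -/
def IsBisection (B : Set G) : Prop := Set.InjOn D.source B ∧ Set.InjOn D.range B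

/-- Membership in the subgroupoid generated by a subset `A` of `G`. -/
inductive InSubgroupoid (A : Set G) : G → Prop
  | base {g} : g ∈ A → InSubgroupoid A g
  | inv {g} : InSubgroupoid A g → InSubgroupoid A (D.inv g)
  | mul {g h} : InSubgroupoid A g → InSubgroupoid A h → D.source g = D.range h →
      InSubgroupoid A (D.mul g h)

/-- `G` is a (locally compact, Hausdorff, étale) ample groupoid: all the algebraic groupoid
axioms hold, the structure maps are suitably continuous, the source and range maps are local
homeomorphisms onto the open unit space (étaleness), and the compact open bisections form a
basis for the topology (ampleness). -/
structure IsAmpleGroupoid [TopologicalSpace G] : Prop where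
  t2 : T2Space G
  locallyCompact : LocallyCompactSpace G
  source_mem : ∀ g, D.source g ∈ D.unitSpace
  range_mem : ∀ g, D.range g ∈ D.unitSpace
  source_unit : ∀ x ∈ D.unitSpace, D.source x = x
  range_unit : ∀ x ∈ D.unitSpace, D.range x = x
  source_mul : ∀ g h, D.source g = D.range h → D.source (D.mul g h) = D.source h
  range_mul : ∀ g h, D.source g = D.range h → D.range (D.mul g h) = D.range g
  mul_assoc : ∀ g h k, D.source g = D.range h → D.source h = D.range k →
      D.mul (D.mul g h) k = D.mul g (D.mul h k)
  source_inv : ∀ g, D.source (D.inv g) = D.range g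
  range_inv : ∀ g, D.range (D.inv g) = D.source g
  inv_mul : ∀ g, D.mul (D.inv g) g = D.source g
  mul_inv : ∀ g, D.mul g (D.inv g) = D.range g
  unit_mul : ∀ g, D.mul (D.range g) g = g
  mul_unit : ∀ g, D.mul g (D.source g) = g
  continuous_inv : Continuous D.inv
  continuous_mul : Continuous fun p : {p : G × G // D.source p.1 = D.range p.2} =>
      D.mul p.1.1 p.1.2
  open_unitSpace : IsOpen D.unitSpace
  etale_source : IsLocalHomeomorph D.source
  etale_range : IsLocalHomeomorph D.range
  ample : ∀ g : G, ∀ U : Set G, IsOpen U → g ∈ U →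
      ∃ B : Set G, g ∈ B ∧ B ⊆ U ∧ IsOpen B ∧ IsCompact B ∧ D.IsBisection B

/-- A groupoid is principal if every arrow with equal range and source is a unit. -/
def IsPrincipal : Prop := ∀ g, D.source g = D.range g → g ∈ D.unitSpace

/-- `G` has dynamic asymptotic dimension at most `d`: for every relatively compact open
subset `K` of `G` there are `d+1` open subsets of the unit space covering `r(K) ∪ s(K)` such
that the subgroupoid generated by the elements of `K` with source and range in one of these
sets is relatively compact. -/
def DadLE [TopologicalSpace G] (d : ℕ) : Prop :=
  ∀ K : Set G, IsOpen K → IsCompact (closure K) →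
    ∃ U : Fin (d + 1) → Set G,
      (∀ i, IsOpen (U i) ∧ U i ⊆ D.unitSpace) ∧
      (D.range '' K ∪ D.source '' K ⊆ ⋃ i, U i) ∧
      ∀ i, IsCompact (closure
        {g | D.InSubgroupoid {g ∈ K | D.source g ∈ U i ∧ D.range g ∈ U i} g})

/-! ### Matui's complex computing the Crainic–Moerdijk groupoid homology `H_*(G)` -/

/-- The space `G^(n)` of composable `n`-tuples. -/
def Comps (n : ℕ) : Set (Fin n → G) :=
  {v | ∀ (j : Fin n) (h : (j : ℕ) + 1 < n), D.source (v j) = D.range (v ⟨(j : ℕ) + 1, h⟩)}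

/-- The face maps of Matui's complex on tuples:
`d_0` drops the first entry, `d_{n+1}` drops the last one, and the intermediate
`d_i` compose two consecutive entries. -/
def dface (n : ℕ) (i : Fin (n + 2)) (v : Fin (n + 1) → G) : Fin n → G := fun j =>
  if (j : ℕ) + 1 < (i : ℕ) then v j.castSucc
  else if (j : ℕ) + 1 = (i : ℕ) then D.mul (v j.castSucc) (v j.succ)
  else v j.succ

/-- The spaces of Matui's complex: `G^0` in degree `0`, and `G^(n)` in degree `n ≥ 1`. -/
def MSp : ℕ → Type u
  | 0 => ↥(D.unitSpace)
  | (n + 1) => ↥(D.Comps (n + 1))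

instance [TopologicalSpace G] (n : ℕ) : TopologicalSpace (D.MSp n) := by
  cases n with
  | zero => exact (inferInstance : TopologicalSpace ↥(D.unitSpace))
  | succ n => exact (inferInstance : TopologicalSpace ↥(D.Comps (n + 1)))

/-- The boundary maps of Matui's complex, given by alternating sums of pushforwards
along the face maps (in degree one, `∂₁ = s_* - r_*`). -/
def mBdry : (n : ℕ) → ((D.MSp (n + 1)) → ℤ) → (D.MSp n) → ℤ
  | 0, a => fun u =>
      (∑ᶠ x ∈ {x : ↥(D.Comps 1) | D.source (x.1 0) = u.1}, a x)
        - ∑ᶠ x ∈ {x : ↥(D.Comps 1) | D.range (x.1 0) = u.1}, a x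
  | (n + 1), a => fun y =>
      ∑ i : Fin (n + 3), (-1 : ℤ) ^ (i : ℕ) *
        ∑ᶠ x ∈ {x : ↥(D.Comps (n + 2)) | D.dface (n + 1) i x.1 = y.1}, a x

variable [TopologicalSpace G]

/-- The cycle subgroup of Matui's complex in degree `n`. -/
def mCycles : (n : ℕ) → AddSubgroup ((D.MSp n) → ℤ)
  | 0 => ccZSub (D.MSp 0)
  | (n + 1) => AddSubgroup.closure {a | a ∈ ccZ (D.MSp (n + 1)) ∧ D.mBdry n a = 0}

/-- The boundary subgroup of Matui's complex in degree `n`. -/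
def mBdries (n : ℕ) : AddSubgroup ((D.MSp n) → ℤ) :=
  AddSubgroup.closure {c | ∃ a ∈ ccZ (D.MSp (n + 1)), D.mBdry n a = c}

/-- The groupoid homology `H_n(G)` (Crainic–Moerdijk homology, computed by Matui's complex). -/
def Homology (n : ℕ) : Type u :=
  (D.mCycles n) ⧸ AddSubgroup.comap (D.mCycles n).subtype (D.mBdries n)

instance (n : ℕ) : AddCommGroup (D.Homology n) :=
  QuotientAddGroup.Quotient.addCommGroup _

/-- The homology class of a cycle. -/
def hcls {n : ℕ} (a : (D.MSp n) → ℤ) (ha : a ∈ D.mCycles n) : D.Homology n :=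
  QuotientAddGroup.mk ⟨a, ha⟩

end GroupoidData
namespace GroupoidData

variable {G : Type u} {D : GroupoidData G}

/-- The data of a left `G`-space: an anchor map `p : X → G⁰ ⊆ G` and a (junk-total)
action map. -/
structure GSpaceData (D : GroupoidData G) (X : Type v) where
  anchor : X → G
  act : G → X → X

variable {X : Type v}

/-- The axioms of an étale left `G`-space. -/
structure GSpaceData.IsGSpace [TopologicalSpace G] [TopologicalSpace X]
    (S : D.GSpaceData X) : Prop where
  anchor_mem : ∀ x, S.anchor x ∈ D.unitSpace
  act_anchor : ∀ g x, D.source g = S.anchor x → S.anchor (S.act g x) = D.range g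
  act_act : ∀ g h x, D.source g = D.range h → D.source h = S.anchor x →
      S.act g (S.act h x) = S.act (D.mul g h) x
  act_unit : ∀ x, S.act (S.anchor x) x = x
  continuous_act : Continuous fun q : {q : G × X // D.source q.1 = S.anchor q.2} =>
      S.act q.1.1 q.1.2
  etale_anchor : IsLocalHomeomorph S.anchor

/-- Freeness of a `G`-space. -/
def GSpaceData.IsFree (S : D.GSpaceData X) : Prop :=
  ∀ g x, D.source g = S.anchor x → S.act g x = x → g = S.anchor x

/-- Properness of a `G`-space. -/
def GSpaceData.IsProper [TopologicalSpace G] [TopologicalSpace X]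
    (S : D.GSpaceData X) : Prop :=
  IsProperMap fun q : {q : G × X // D.source q.1 = S.anchor q.2} =>
    ((S.act q.1.1 q.1.2, q.1.2) : X × X)

/-- The orbit relation of a `G`-space. -/
def GSpaceData.orbRel (S : D.GSpaceData X) (x y : X) : Prop :=
  ∃ g, D.source g = S.anchor x ∧ y = S.act g x

/-- The quotient `G\X` of a `G`-space. -/
def GSpaceData.Quot' (S : D.GSpaceData X) : Type v := Quot S.orbRel

/-- The quotient topology on `G\X`. -/
def GSpaceData.quotTop [TopologicalSpace X] (S : D.GSpaceData X) :
    TopologicalSpace S.Quot' :=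
  TopologicalSpace.coinduced (Quot.mk S.orbRel) inferInstance

/-- The `ℤ[G]`-module action on `ℤ[X]`:
`(f·a)(x) = ∑_{g ∈ G^{p(x)}} f(g) a(g⁻¹x)`. -/
def GSpaceData.actFun (S : D.GSpaceData X) (f : G → ℤ) (a : X → ℤ) : X → ℤ :=
  fun x => ∑ᶠ g : G, if D.range g = S.anchor x then f g * a (S.act (D.inv g) x) else 0

/-- The action of the augmentation `ε(f)` on `ℤ[X]`. -/
def GSpaceData.epsFun (S : D.GSpaceData X) (f : G → ℤ) (a : X → ℤ) : X → ℤ :=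
  fun x => (∑ᶠ g ∈ {g : G | D.source g = S.anchor x}, f g) * a x

/-- The subgroup of `ℤ[X]` generated by the elements `f·a - ε(f)·a`. -/
def GSpaceData.coinvRel [TopologicalSpace G] [TopologicalSpace X]
    (S : D.GSpaceData X) : AddSubgroup (X → ℤ) :=
  AddSubgroup.closure
    {c | ∃ f a, f ∈ ccZ G ∧ a ∈ ccZ X ∧ c = S.actFun f a - S.epsFun f a}

/-- The coinvariants `ℤ[X]_G`. -/
def GSpaceData.Coinv [TopologicalSpace G] [TopologicalSpace X]
    (S : D.GSpaceData X) : Type v :=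
  ↥(ccZSub X) ⧸ AddSubgroup.comap (ccZSub X).subtype S.coinvRel

instance [TopologicalSpace G] [TopologicalSpace X] (S : D.GSpaceData X) :
    AddCommGroup S.Coinv := QuotientAddGroup.Quotient.addCommGroup _

/-- The class of `f ∈ ℤ[X]` in the coinvariants `ℤ[X]_G`. -/
def GSpaceData.coinvCls [TopologicalSpace G] [TopologicalSpace X]
    (S : D.GSpaceData X) (f : X → ℤ) (hf : f ∈ ccZ X) : S.Coinv :=
  QuotientAddGroup.mk ⟨f, hf⟩

end GroupoidData

/-!
By freeness `g ↦ g x` identifies `G_{p(x)}` with the orbit of `x`, so the map in question is the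
pushforward along the quotient map `π : X → G\X`. Freeness, properness and openness of the units
make `π` a local homeomorphism onto a Hausdorff space. The compact open sets on which `π` is
injective (slices) then do everything: a compact subset of `G\X` lies in the image of one slice,
which gives surjectivity. For the kernel, both `f·a` and `ε(f)·a` are pushforwards of
`(g, x) ↦ f(g) a(x)` along the range and source maps of the action groupoid, and `π` equalises
these two maps. Conversely, if two slices have the same image, the arrows from one to the other
form a compact open set, and its indicator shows that the indicators of the slices agree in the
coinvariants; hence every `f` is equivalent to a function on a single slice, where it is determined
by its pushforward.
-/

section General

open Topology TopologicalSpace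

variable {X : Type v} {Y : Type w}

section Pushforward

variable {φ : X → Y}

/-- The functions on `X` with finite support in every fibre of `φ`. These are the functions whose
pushforward along `φ` is a genuine sum: on an infinite fibre support `pushf` takes the junk
value `0`. -/
def fiberFinite (φ : X → Y) : AddSubgroup (X → ℤ) where
  carrier := {a | ∀ y, (φ ⁻¹' {y} ∩ support a).Finite}
  zero_mem' y := by simp
  add_mem' {a b} ha hb y := ((ha y).union (hb y)).subset <| by
    rw [← inter_union_distrib_left]
    exact inter_subset_inter_right _ (support_add a b)
  neg_mem' {a} ha y := by simpa only [support_neg] using ha y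

theorem pushf_zero : pushf φ 0 = 0 :=
  funext fun _ ↦ finsum_mem_zero _

theorem pushf_add {a b : X → ℤ} (ha : a ∈ fiberFinite φ) (hb : b ∈ fiberFinite φ) :
    pushf φ (a + b) = pushf φ a + pushf φ b :=
  funext fun y ↦ finsum_mem_add_distrib' (ha y) (hb y)

/-- The pushforward along `φ`, as a homomorphism on the functions for which it is additive. -/
def pushfHom (φ : X → Y) : fiberFinite φ →+ (Y → ℤ) :=
  AddMonoidHom.mk' (fun a ↦ pushf φ a) fun a b ↦ pushf_add a.2 b.2

theorem pushf_indicator_comp {W : Set X} (hW : InjOn φ W) (c : Y → ℤ) :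
    pushf φ (W.indicator (c ∘ φ)) = (φ '' W).indicator c := by
  ext y
  by_cases hy : y ∈ φ '' W
  · obtain ⟨w, hw, rfl⟩ := hy
    rw [indicator_of_mem (mem_image_of_mem φ hw)]
    have fiber_inter_support : φ ⁻¹' {φ w} ∩ support (W.indicator (c ∘ φ)) =
        {w} ∩ support (W.indicator (c ∘ φ)) := by
      ext x
      refine and_congr_left fun hx ↦ ⟨fun hxw ↦ ?_, fun hxw ↦ congrArg φ hxw⟩
      exact hW (mem_of_indicator_ne_zero hx) hw hxw
    calc pushf φ (W.indicator (c ∘ φ)) (φ w)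
        = ∑ᶠ x ∈ ({w} : Set X), W.indicator (c ∘ φ) x :=
          finsum_mem_inter_support_eq _ _ _ fiber_inter_support
      _ = c (φ w) := by rw [finsum_mem_singleton, indicator_of_mem hw, comp_apply]
  · rw [indicator_of_notMem hy]
    refine finsum_mem_eq_zero_of_forall_eq_zero fun x hx ↦ indicator_of_notMem (fun hxW ↦ hy ?_) _
    exact ⟨x, hxW, hx⟩

theorem pushf_indicator_const {W : Set X} (hW : InjOn φ W) (n : ℤ) :
    pushf φ (W.indicator fun _ ↦ n) = (φ '' W).indicator fun _ ↦ n :=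
  pushf_indicator_comp hW fun _ ↦ n

theorem indicator_pushf_indicator_const {U W : Set X} (hU : InjOn φ U) (n : ℤ) :
    W.indicator (pushf φ (U.indicator fun _ ↦ n) ∘ φ) =
      (W ∩ φ ⁻¹' (φ '' U)).indicator fun _ ↦ n := by
  rw [pushf_indicator_const hU, ← indicator_indicator]
  rfl

section Comp

variable {Z : Type*} {ψ : Y → Z} {a : X → ℤ}

theorem support_pushf_subset : support (pushf φ a) ⊆ φ '' support a := by
  intro y hy
  obtain ⟨x, hxy, hx⟩ := exists_ne_zero_of_finsum_mem_ne_zero hy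
  exact ⟨x, hx, hxy⟩

theorem fiber_inter_support_pushf_subset (z : Z) :
    ψ ⁻¹' {z} ∩ support (pushf φ a) ⊆ φ '' ((ψ ∘ φ) ⁻¹' {z} ∩ support a) := by
  rintro _ ⟨hz, hy⟩
  obtain ⟨x, hx, rfl⟩ := support_pushf_subset hy
  exact ⟨x, ⟨hz, hx⟩, rfl⟩

theorem pushf_mem_fiberFinite (ha : a ∈ fiberFinite (ψ ∘ φ)) : pushf φ a ∈ fiberFinite ψ :=
  fun z ↦ ((ha z).image φ).subset (fiber_inter_support_pushf_subset z)

theorem pushf_comp (ha : a ∈ fiberFinite (ψ ∘ φ)) :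
    pushf (ψ ∘ φ) a = pushf ψ (pushf φ a) := by
  ext z
  have sum_fiber : ∀ y ∈ (ha z).toFinset.image φ,
      ∑ x ∈ (ha z).toFinset with φ x = y, a x = pushf φ a y := by
    intro y hy
    obtain ⟨x, hx, rfl⟩ := Finset.mem_image.1 hy
    refine (finsum_mem_eq_sum_of_inter_support_eq a ?_).symm
    ext x'
    have hxz : ψ (φ x) = z := ((ha z).mem_toFinset.1 hx).1
    simp only [mem_inter_iff, mem_preimage, mem_singleton_iff, mem_support, Finset.coe_filter,
      Finite.mem_toFinset, mem_ofPred_eq, comp_apply]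
    grind
  calc pushf (ψ ∘ φ) a z
      = ∑ x ∈ (ha z).toFinset, a x := finsum_mem_eq_sum a (ha z)
    _ = ∑ y ∈ (ha z).toFinset.image φ, ∑ x ∈ (ha z).toFinset with φ x = y, a x :=
        (Finset.sum_fiberwise_of_maps_to (fun _ ↦ Finset.mem_image_of_mem φ) a).symm
    _ = ∑ y ∈ (ha z).toFinset.image φ, pushf φ a y := Finset.sum_congr rfl sum_fiber
    _ = pushf ψ (pushf φ a) z := by
        refine (finsum_mem_eq_sum_of_subset _ ?_ ?_).symm
        · simpa using fiber_inter_support_pushf_subset (ψ := ψ) (φ := φ) (a := a) z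
        · simp only [Finset.coe_image, Finite.coe_toFinset, image_subset_iff]
          exact fun x hx ↦ hx.1

end Comp

end Pushforward

section Pullback

variable {A B Z : Type*} {s : A → Z} {p : B → Z}

/-- The function `(g, x) ↦ f g * a x` on the fibre product of `s` and `p`. -/
def pullbackMul (f : A → ℤ) (a : B → ℤ) (q : s.Pullback p) : ℤ :=
  f q.fst * a q.snd

theorem pullbackMul_mem_fiberFinite {π : B → Y} {f : A → ℤ} {a : B → ℤ}
    (hf : f ∈ fiberFinite s) (ha : a ∈ fiberFinite π) :
    (pullbackMul f a : s.Pullback p → ℤ) ∈ fiberFinite (π ∘ Function.Pullback.snd) := by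
  intro y
  have finite_pairs := (ha y).biUnion fun x _ ↦ (hf (p x)).prod (finite_singleton x)
  refine (finite_pairs.preimage Subtype.val_injective.injOn).subset ?_
  rintro ⟨⟨g, x⟩, hgx⟩ ⟨hxy, hne⟩
  exact mem_biUnion ⟨hxy, right_ne_zero_of_mul hne⟩ ⟨⟨hgx, left_ne_zero_of_mul hne⟩, rfl⟩

theorem pullbackMul_indicator_fst_image {C : Set (s.Pullback p)} {U : Set B} (hU : InjOn p U)
    (hCU : MapsTo Function.Pullback.snd C U) (n : ℤ) :
    pullbackMul ((Function.Pullback.fst '' C).indicator fun _ ↦ n) (U.indicator fun _ ↦ 1) =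
      C.indicator fun _ ↦ n := by
  ext q
  by_cases hqU : q.snd ∈ U
  · have fst_mem_iff : q.fst ∈ Function.Pullback.fst '' C ↔ q ∈ C := by
      refine ⟨?_, mem_image_of_mem _⟩
      rintro ⟨q', hq', hfst⟩
      have hsnd : q'.snd = q.snd := hU (hCU hq') hqU <| by
        calc p q'.snd = s q'.fst := q'.2.symm
          _ = s q.fst := congrArg s hfst
          _ = p q.snd := q.2
      exact (Subtype.ext (Prod.ext hfst hsnd) : q' = q) ▸ hq'
    simp only [pullbackMul, indicator_of_mem hqU, mul_one, indicator_apply, fst_mem_iff]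
  · rw [pullbackMul, indicator_of_notMem hqU, mul_zero, indicator_of_notMem fun hq ↦ hqU (hCU hq)]

variable [TopologicalSpace A] [TopologicalSpace B] [TopologicalSpace Z]

theorem isOpenMap_pullback_snd (hs : IsOpenMap s) (hp : Continuous p) :
    IsOpenMap (Function.Pullback.snd : s.Pullback p → B) := by
  refine ((isTopologicalBasis_opens.prod isTopologicalBasis_opens).isInducing
    IsInducing.subtypeVal).isOpenMap_iff.2 ?_
  rintro _ ⟨_, ⟨U, hU, V, hV, rfl⟩, rfl⟩
  convert hV.inter ((hs U hU).preimage hp) using 1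
  ext x
  constructor
  · rintro ⟨⟨⟨g, y⟩, hgy⟩, ⟨hg, hy⟩, rfl⟩
    exact ⟨hy, g, hg, hgy⟩
  · rintro ⟨hx, g, hg, hgx⟩
    exact ⟨⟨(g, x), hgx⟩, ⟨hg, hx⟩, rfl⟩

theorem isOpenMap_pullback_fst (hs : Continuous s) (hp : IsOpenMap p) :
    IsOpenMap (Function.Pullback.fst : s.Pullback p → A) := by
  let swap : s.Pullback p ≃ₜ p.Pullback s := (Homeomorph.prodComm A B).subtype fun _ ↦ eq_comm
  exact (isOpenMap_pullback_snd hp hs).comp swap.isOpenMap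

end Pullback

variable [TopologicalSpace X]

/-- A slice of `φ`: a compact open set on which `φ` is injective. For a local homeomorphism these
are the sets over which pushforward and pullback of functions are inverse to each other. -/
structure IsSlice (φ : X → Y) (U : Set X) : Prop where
  isOpen : IsOpen U
  isCompact : IsCompact U
  injOn : InjOn φ U

theorem IsSlice.inter {φ : X → Y} {U C : Set X} (hU : IsSlice φ U) (hC : IsClopen C) :
    IsSlice φ (U ∩ C) :=
  ⟨hU.isOpen.inter hC.isOpen, hU.isCompact.inter_right hC.isClosed, hU.injOn.mono inter_subset_left⟩

variable [TopologicalSpace Y] {φ : X → Y}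

theorem isLocalHomeomorph_of_isLocallyInjective (hφ : Continuous φ) (hopen : IsOpenMap φ)
    (hinj : IsLocallyInjective φ) : IsLocalHomeomorph φ := by
  refine isLocalHomeomorph_iff_isOpenEmbedding_restrict.2 fun x ↦ ?_
  obtain ⟨U, hU, hxU, hUinj⟩ := hinj x
  exact ⟨U, hU.mem_nhds hxU, .of_continuous_injective_isOpenMap
    (hφ.comp continuous_subtype_val) hUinj.injective (hopen.domRestrict hU)⟩

theorem prespectralSpace_of_isLocalHomeomorph [PrespectralSpace Y] (hφ : IsLocalHomeomorph φ) :
    PrespectralSpace X := by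
  choose e hxe _ using hφ
  let U (x : X) : Opens X := ⟨(e x).source, (e x).open_source⟩
  have prespectral_U (x : X) : PrespectralSpace (U x) :=
    (e x).isOpenEmbedding_restrict.prespectralSpace
  exact .of_isOpenCover (U := U) (.of_sets _ (iUnion_eq_univ_iff.2 fun x ↦ ⟨x, hxe x⟩))

theorem finite_fiber_inter_of_isCompact [T1Space Y] (hφ : IsLocalHomeomorph φ) {K : Set X}
    (hK : IsCompact K) (y : Y) : (φ ⁻¹' {y} ∩ K).Finite := by
  have image_subsingleton : (φ '' (φ ⁻¹' {y} ∩ K)).Subsingleton :=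
    subsingleton_singleton.anti (image_subset_iff.2 inter_subset_left)
  refine (hK.inter_left (isClosed_singleton.preimage hφ.continuous)).finite ?_
  exact (hφ.isLocalHomeomorphOn.mono (subset_univ _)).isDiscrete_of_image
    image_subsingleton.isDiscrete

theorem ccZSub_le_fiberFinite [T1Space Y] (hφ : IsLocalHomeomorph φ) :
    ccZSub X ≤ fiberFinite φ := fun a ha y ↦
  (finite_fiber_inter_of_isCompact hφ ha.2 y).subset
    (inter_subset_inter_right _ (subset_tsupport a))

theorem indicator_mem_ccZ_of_isClopen {C : Set X} (hC : IsClopen C) {f : X → ℤ} (hf : f ∈ ccZ X) :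
    C.indicator f ∈ ccZ X :=
  ⟨hC.continuous_indicator hf.1, hf.2.mono (support_indicator.trans_subset inter_subset_right)⟩

theorem indicator_mem_ccZ [T2Space X] {U : Set X} (hUo : IsOpen U) (hUc : IsCompact U)
    {c : X → ℤ} (hc : Continuous c) : U.indicator c ∈ ccZ X :=
  ⟨IsClopen.continuous_indicator ⟨hUc.isClosed, hUo⟩ hc,
    HasCompactSupport.intro hUc fun _ hx ↦ indicator_of_notMem hx _⟩

theorem exists_isOpen_isCompact_subset [PrespectralSpace X] {x : X} {O : Set X} (hO : O ∈ 𝓝 x) :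
    ∃ U ⊆ O, IsOpen U ∧ IsCompact U ∧ x ∈ U := by
  obtain ⟨U, ⟨hUo, hUc⟩, hxU, hUO⟩ := PrespectralSpace.isTopologicalBasis.mem_nhds_iff.1 hO
  exact ⟨U, hUO, hUo, hUc, hxU⟩

theorem ccZ_induction [T2Space X] [PrespectralSpace X] {P : (X → ℤ) → Prop} {f : X → ℤ}
    (hf : f ∈ ccZ X) (zero : P 0)
    (add : ∀ a ∈ ccZ X, ∀ b ∈ ccZ X, P a → P b → P (a + b))
    (indicator : ∀ x ∈ tsupport f, ∃ O ∈ 𝓝 x, ∀ U ⊆ O, IsOpen U → IsCompact U →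
      ∀ n : ℤ, P (U.indicator fun _ ↦ n)) : P f := by
  suffices ∃ C, tsupport f ⊆ C ∧ IsClopen C ∧ ∀ U ⊆ C, IsClopen U → P (U.indicator f) by
    obtain ⟨C, hfC, hC, hP⟩ := this
    simpa only [indicator_eq_self.2 ((subset_tsupport f).trans hfC)] using hP C subset_rfl hC
  refine hf.2.isCompact.induction_on (p := fun s ↦ ∃ C, s ⊆ C ∧ IsClopen C ∧
    ∀ U ⊆ C, IsClopen U → P (U.indicator f)) ?empty ?mono ?union ?nhds
  case empty =>
    refine ⟨∅, subset_rfl, isClopen_empty, fun U hU _ ↦ ?_⟩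
    rwa [subset_empty_iff.1 hU, indicator_empty]
  case mono =>
    rintro s t hst ⟨C, htC, hC⟩
    exact ⟨C, hst.trans htC, hC⟩
  case union =>
    rintro s t ⟨C, hsC, hC, hPC⟩ ⟨E, htE, hE, hPE⟩
    refine ⟨C ∪ E, union_subset_union hsC htE, hC.union hE, fun U hU hUclopen ↦ ?_⟩
    rw [← inter_union_sdiff U C, indicator_union_of_disjoint
      (disjoint_sdiff_right.mono_left inter_subset_right)]
    have hUC := hUclopen.inter hC
    have hUE := hUclopen.diff hC
    exact add _ (indicator_mem_ccZ_of_isClopen hUC hf) _ (indicator_mem_ccZ_of_isClopen hUE hf)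
      (hPC _ inter_subset_right hUC) (hPE _ (sdiff_subset_iff.2 hU) hUE)
  case nhds =>
    intro x hx
    obtain ⟨O, hO, hP⟩ := indicator x hx
    have hconst : f ⁻¹' {f x} ∈ 𝓝 x := hf.1.continuousAt.preimage_mem_nhds (by simp)
    obtain ⟨C, hCO, hCo, hCc, hxC⟩ := exists_isOpen_isCompact_subset (Filter.inter_mem hO hconst)
    refine ⟨C, mem_nhdsWithin_of_mem_nhds (hCo.mem_nhds hxC), C, subset_rfl,
      ⟨hCc.isClosed, hCo⟩, fun U hUC hU ↦ ?_⟩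
    have indicator_const : U.indicator f = U.indicator fun _ ↦ f x :=
      indicator_congr fun y hy ↦ (hCO (hUC hy)).2
    rw [indicator_const]
    exact hP U (fun y hy ↦ (hCO (hUC hy)).1) hU.isOpen (hCc.of_isClosed_subset hU.isClosed hUC) _

theorem IsSlice.isClopen_image [T2Space Y] {U : Set X} (hU : IsSlice φ U)
    (hφ : IsLocalHomeomorph φ) : IsClopen (φ '' U) :=
  ⟨(hU.isCompact.image hφ.continuous).isClosed, hφ.isOpenMap U hU.isOpen⟩

theorem exists_isSlice_subset [PrespectralSpace X] (hφ : IsLocalHomeomorph φ) {x : X} {O : Set X}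
    (hO : O ∈ 𝓝 x) : ∃ U ⊆ O, IsSlice φ U ∧ x ∈ U := by
  obtain ⟨V, hV, hxV, hinj⟩ := hφ.isLocallyInjective x
  obtain ⟨U, hUOV, hUo, hUc, hxU⟩ :=
    exists_isOpen_isCompact_subset (Filter.inter_mem hO (hV.mem_nhds hxV))
  exact ⟨U, fun y hy ↦ (hUOV hy).1, ⟨hUo, hUc, hinj.mono fun y hy ↦ (hUOV hy).2⟩, hxU⟩

theorem exists_isSlice_subset_image [PrespectralSpace X] [T2Space Y] (hφ : IsLocalHomeomorph φ)
    {K : Set Y} (hK : IsCompact K) (hKφ : K ⊆ range φ) : ∃ W, IsSlice φ W ∧ K ⊆ φ '' W := by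
  refine hK.induction_on (p := fun s ↦ ∃ W, IsSlice φ W ∧ s ⊆ φ '' W) ?empty ?mono ?union ?nhds
  case empty => exact ⟨∅, ⟨isOpen_empty, isCompact_empty, injOn_empty φ⟩, empty_subset _⟩
  case mono =>
    rintro s t hst ⟨W, hW, htW⟩
    exact ⟨W, hW, hst.trans htW⟩
  case union =>
    rintro s t ⟨W, hW, hsW⟩ ⟨V, hV, htV⟩
    have hV' : IsSlice φ (V ∩ (φ ⁻¹' (φ '' W))ᶜ) :=
      hV.inter ((hW.isClopen_image hφ).preimage hφ.continuous).compl
    refine ⟨W ∪ V ∩ (φ ⁻¹' (φ '' W))ᶜ, ⟨hW.isOpen.union hV'.isOpen,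
      hW.isCompact.union hV'.isCompact, (injOn_union ?_).2 ⟨hW.injOn, hV'.injOn, ?_⟩⟩, ?_⟩
    · exact disjoint_left.2 fun x hxW hxV ↦ hxV.2 (mem_image_of_mem φ hxW)
    · exact fun x hxW y hyV hxy ↦ hyV.2 ⟨x, hxW, hxy⟩
    · rw [image_union, ← preimage_compl, image_inter_preimage, ← sdiff_eq, union_sdiff_self]
      exact union_subset_union hsW htV
  case nhds =>
    intro y hy
    obtain ⟨x, rfl⟩ := hKφ hy
    obtain ⟨W, -, hW, hxW⟩ := exists_isSlice_subset hφ (Filter.univ_mem (f := 𝓝 x))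
    exact ⟨φ '' W, mem_nhdsWithin_of_mem_nhds ((hW.isClopen_image hφ).isOpen.mem_nhds
      (mem_image_of_mem φ hxW)), W, hW, subset_rfl⟩

section Hausdorff

variable [T2Space X] [PrespectralSpace X] [T2Space Y]

theorem pushf_mem_ccZ (hφ : IsLocalHomeomorph φ) {f : X → ℤ} (hf : f ∈ ccZ X) :
    pushf φ f ∈ ccZ Y := by
  have hfin := ccZSub_le_fiberFinite hφ
  refine ccZ_induction (P := fun h ↦ pushf φ h ∈ ccZ Y) hf ?zero ?add ?indicator
  case zero => exact pushf_zero (φ := φ) ▸ (ccZSub Y).zero_mem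
  case add =>
    intro a ha b hb hpa hpb
    rw [pushf_add (hfin ha) (hfin hb)]
    exact (ccZSub Y).add_mem hpa hpb
  case indicator =>
    intro x _
    obtain ⟨O, hO, hxO, hinj⟩ := hφ.isLocallyInjective x
    refine ⟨O, hO.mem_nhds hxO, fun U hUO hUo hUc n ↦ ?_⟩
    rw [pushf_indicator_const (hinj.mono hUO)]
    exact indicator_mem_ccZ (hφ.isOpenMap U hUo) (hUc.image hφ.continuous) continuous_const

/-- The pushforward `ℤ[X] → ℤ[Y]` along a local homeomorphism `φ : X → Y`. -/
def ccZPushHom (hφ : IsLocalHomeomorph φ) : ccZSub X →+ ccZSub Y :=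
  ((pushfHom φ).comp (AddSubgroup.inclusion (ccZSub_le_fiberFinite hφ))).codRestrict (ccZSub Y)
    fun f ↦ pushf_mem_ccZ hφ f.2

theorem mem_ker_ccZPushHom (hφ : IsLocalHomeomorph φ) (f : ccZSub X) :
    f ∈ (ccZPushHom hφ).ker ↔ pushf φ f = 0 :=
  AddMonoidHom.mem_ker.trans Subtype.ext_iff

theorem ccZPushHom_surjective (hφ : IsLocalHomeomorph φ) (hsurj : Surjective φ) :
    Surjective (ccZPushHom hφ) := by
  rintro ⟨c, hc⟩
  obtain ⟨W, hW, hcW⟩ :=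
    exists_isSlice_subset_image hφ hc.2.isCompact (hsurj.range_eq ▸ subset_univ _)
  refine ⟨⟨W.indicator (c ∘ φ),
    indicator_mem_ccZ hW.isOpen hW.isCompact (hc.1.comp hφ.continuous)⟩, Subtype.ext ?_⟩
  calc pushf φ (W.indicator (c ∘ φ)) = (φ '' W).indicator c := pushf_indicator_comp hW.injOn c
    _ = c := indicator_eq_self.2 ((subset_tsupport c).trans hcW)

/-- Modulo exchanges of slices, `f` can be moved into a single slice, on which a function is
determined by its pushforward. -/
theorem mem_of_pushf_eq_zero (hφ : IsLocalHomeomorph φ) {N : AddSubgroup (X → ℤ)}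
    (exchange : ∀ x, ∃ O ∈ 𝓝 x, ∀ U V, U ⊆ O → IsSlice φ U → IsSlice φ V → φ '' U = φ '' V →
      ∀ n : ℤ, (V.indicator fun _ ↦ n) - (U.indicator fun _ ↦ n) ∈ N)
    {f : X → ℤ} (hf : f ∈ ccZ X) (hpush : pushf φ f = 0) : f ∈ N := by
  have hfin := ccZSub_le_fiberFinite hφ
  obtain ⟨W, hW, hfW⟩ := exists_isSlice_subset_image hφ (hf.2.isCompact.image hφ.continuous)
    (image_subset_range _ _)
  have hWclopen := hW.isClopen_image hφ
  suffices W.indicator (pushf φ f ∘ φ) - f ∈ N by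
    simpa only [hpush, Pi.zero_comp, indicator_zero', zero_sub, neg_mem_iff] using this
  refine ccZ_induction (P := fun h ↦ W.indicator (pushf φ h ∘ φ) - h ∈ N) hf ?zero ?add ?indicator
  case zero =>
    simp only [pushf_zero, Pi.zero_comp, indicator_zero', sub_zero, N.zero_mem]
  case add =>
    intro a ha b hb hNa hNb
    have split : W.indicator (pushf φ (a + b) ∘ φ) - (a + b) =
        (W.indicator (pushf φ a ∘ φ) - a) + (W.indicator (pushf φ b ∘ φ) - b) := by
      rw [pushf_add (hfin ha) (hfin hb), Pi.add_comp, indicator_add', add_sub_add_comm]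
    exact split ▸ N.add_mem hNa hNb
  case indicator =>
    intro x hx
    obtain ⟨O, hO, hexchange⟩ := exchange x
    obtain ⟨E, hE, hxE, hinj⟩ := hφ.isLocallyInjective x
    have hWx : φ ⁻¹' (φ '' W) ∈ 𝓝 x :=
      (hWclopen.isOpen.preimage hφ.continuous).mem_nhds (hfW (mem_image_of_mem φ hx))
    refine ⟨O ∩ (E ∩ φ ⁻¹' (φ '' W)),
      Filter.inter_mem hO (Filter.inter_mem (hE.mem_nhds hxE) hWx), fun U hU hUo hUc n ↦ ?_⟩
    have hUslice : IsSlice φ U := ⟨hUo, hUc, hinj.mono fun y hy ↦ (hU hy).2.1⟩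
    have image_eq : φ '' U = φ '' (W ∩ φ ⁻¹' (φ '' U)) := by
      rw [image_inter_preimage, inter_eq_right.2 (image_subset_iff.2 fun y hy ↦ (hU hy).2.2)]
    rw [indicator_pushf_indicator_const hUslice.injOn]
    exact hexchange _ _ (fun y hy ↦ (hU hy).1) hUslice
      (hW.inter ((hUslice.isClopen_image hφ).preimage hφ.continuous)) image_eq n

end Hausdorff

end General

theorem GroupoidData.IsAmpleGroupoid.prespectralSpace {G : Type u} [TopologicalSpace G]
    {D : GroupoidData G} (hA : D.IsAmpleGroupoid) : PrespectralSpace G where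
  isTopologicalBasis := by
    refine TopologicalSpace.isTopologicalBasis_of_isOpen_of_nhds (fun U hU ↦ hU.1)
      fun g U hgU hU ↦ ?_
    obtain ⟨B, hgB, hBU, hBo, hBc, -⟩ := hA.ample g U hU hgU
    exact ⟨B, ⟨hBo, hBc⟩, hgB, hBU⟩

namespace GroupoidData.GSpaceData

variable {G : Type u} {D : GroupoidData G} {X : Type v} {S : D.GSpaceData X}

/-- The arrow space of the action groupoid: the pairs `(g, x)` for which `g x` is defined. -/
abbrev Arrows (S : D.GSpaceData X) : Type (max u v) := D.source.Pullback S.anchor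

/-- The range map `(g, x) ↦ g x` of the action groupoid; its source map is `Pullback.snd`. -/
def arrowAct (S : D.GSpaceData X) (q : S.Arrows) : X := S.act q.fst q.snd

/-- The quotient map `X → G\X`. -/
def quotMk (S : D.GSpaceData X) : X → S.Quot' := Quot.mk S.orbRel

/-- The arrows of the action groupoid that start in `U` and end in `V`. -/
def arrowsBetween (S : D.GSpaceData X) (U V : Set X) : Set S.Arrows :=
  Pullback.snd ⁻¹' U ∩ S.arrowAct ⁻¹' V

theorem quotMk_surjective : Surjective S.quotMk := Quot.mk_surjective

theorem quotMk_arrowAct (q : S.Arrows) : S.quotMk (S.arrowAct q) = S.quotMk q.snd :=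
  (Quot.sound ⟨q.fst, q.2, rfl⟩).symm

theorem epsFun_eq_pushf (f : G → ℤ) (a : X → ℤ) :
    S.epsFun f a = pushf (Pullback.snd : S.Arrows → X) (pullbackMul f a) := by
  ext x
  have bijOn_fst : BijOn Pullback.fst ((Pullback.snd : S.Arrows → X) ⁻¹' {x})
      {g : G | D.source g = S.anchor x} := by
    refine ⟨?_, ?_, fun g hgx ↦ ⟨⟨(g, x), hgx⟩, rfl, rfl⟩⟩
    · rintro q rfl
      exact q.2
    · rintro q rfl q' hsnd hfst
      exact Subtype.ext (Prod.ext hfst (Eq.symm hsnd))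
  calc S.epsFun f a x
      = ∑ᶠ g ∈ {g | D.source g = S.anchor x}, f g * a x := finsum_mem_mul _ _
    _ = pushf Pullback.snd (pullbackMul f a) x := by
        refine (finsum_mem_eq_of_bijOn _ bijOn_fst ?_).symm
        rintro q rfl
        rfl

variable [TopologicalSpace G] [TopologicalSpace X]

theorem act_inv_act (hA : D.IsAmpleGroupoid) (hS : S.IsGSpace) {g : G} {x : X}
    (hgx : D.source g = S.anchor x) : S.act (D.inv g) (S.act g x) = x := by
  rw [hS.act_act _ _ _ (hA.source_inv g) hgx, hA.inv_mul, hgx, hS.act_unit]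

theorem act_inv_arrowAct (hA : D.IsAmpleGroupoid) (hS : S.IsGSpace) (q : S.Arrows) :
    S.act (D.inv q.fst) (S.arrowAct q) = q.snd :=
  act_inv_act hA hS q.2

theorem act_act_inv (hA : D.IsAmpleGroupoid) (hS : S.IsGSpace) {g : G} {x : X}
    (hgx : D.range g = S.anchor x) : S.act g (S.act (D.inv g) x) = x := by
  rw [hS.act_act _ _ _ (hA.range_inv g).symm ((hA.source_inv g).trans hgx), hA.mul_inv, hgx,
    hS.act_unit]

theorem anchor_act_inv (hA : D.IsAmpleGroupoid) (hS : S.IsGSpace) {g : G} {x : X}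
    (hgx : D.range g = S.anchor x) : S.anchor (S.act (D.inv g) x) = D.source g := by
  rw [hS.act_anchor _ _ ((hA.source_inv g).trans hgx), hA.range_inv]

theorem orbRel_equivalence (hA : D.IsAmpleGroupoid) (hS : S.IsGSpace) :
    Equivalence S.orbRel where
  refl x := ⟨S.anchor x, hA.source_unit _ (hS.anchor_mem x), (hS.act_unit x).symm⟩
  symm := by
    rintro x _ ⟨g, hgx, rfl⟩
    exact ⟨D.inv g, by rw [hA.source_inv, hS.act_anchor _ _ hgx], (act_inv_act hA hS hgx).symm⟩
  trans := by
    rintro x _ _ ⟨g, hgx, rfl⟩ ⟨h, hhg, rfl⟩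
    rw [hS.act_anchor _ _ hgx] at hhg
    exact ⟨D.mul h g, by rw [hA.source_mul _ _ hhg, hgx], hS.act_act _ _ _ hhg hgx⟩

theorem quotMk_eq_iff (hA : D.IsAmpleGroupoid) (hS : S.IsGSpace) {x y : X} :
    S.quotMk x = S.quotMk y ↔ S.orbRel x y :=
  Quot.eq.trans (orbRel_equivalence hA hS).eqvGen_iff

theorem exists_arrow_of_quotMk_eq (hA : D.IsAmpleGroupoid) (hS : S.IsGSpace) {x y : X}
    (hxy : S.quotMk x = S.quotMk y) : ∃ q : S.Arrows, q.snd = x ∧ S.arrowAct q = y := by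
  obtain ⟨g, hgx, rfl⟩ := (quotMk_eq_iff hA hS).1 hxy
  exact ⟨⟨(g, x), hgx⟩, rfl, rfl⟩

theorem eq_of_act_eq (hA : D.IsAmpleGroupoid) (hS : S.IsGSpace) (hfree : S.IsFree) {g h : G}
    {x : X} (hgx : D.source g = S.anchor x) (hhx : D.source h = S.anchor x)
    (heq : S.act g x = S.act h x) : g = h := by
  have range_eq : D.range g = D.range h := by
    rw [← hS.act_anchor _ _ hgx, ← hS.act_anchor _ _ hhx, heq]
  have composable : D.source (D.inv h) = D.range g := by rw [hA.source_inv, range_eq]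
  have inv_mul_eq_unit : D.mul (D.inv h) g = S.anchor x := by
    refine hfree _ _ (by rw [hA.source_mul _ _ composable, hgx]) ?_
    rw [← hS.act_act _ _ _ composable hgx, heq, act_inv_act hA hS hhx]
  calc g = D.mul (D.mul h (D.inv h)) g := by rw [hA.mul_inv, ← range_eq, hA.unit_mul]
    _ = D.mul h (D.mul (D.inv h) g) := hA.mul_assoc _ _ _ (hA.range_inv h).symm composable
    _ = h := by rw [inv_mul_eq_unit, ← hhx, hA.mul_unit]

theorem arrow_ext (hA : D.IsAmpleGroupoid) (hS : S.IsGSpace) (hfree : S.IsFree) {q q' : S.Arrows}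
    (hsnd : q.snd = q'.snd) (hact : S.arrowAct q = S.arrowAct q') : q = q' := by
  obtain ⟨⟨g, x⟩, hgx⟩ := q
  obtain ⟨⟨h, y⟩, hhy⟩ := q'
  obtain rfl : x = y := hsnd
  obtain rfl : g = h := eq_of_act_eq hA hS hfree hgx hhy hact
  rfl

theorem arrowAct_eq_snd_iff (hA : D.IsAmpleGroupoid) (hS : S.IsGSpace) (hfree : S.IsFree)
    {q : S.Arrows} : S.arrowAct q = q.snd ↔ q.fst ∈ D.unitSpace := by
  refine ⟨fun h ↦ ?_, fun h ↦ ?_⟩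
  · have fst_eq : q.fst = S.anchor q.snd := hfree _ _ q.2 h
    exact fst_eq ▸ hS.anchor_mem _
  · have fst_eq : q.fst = S.anchor q.snd := (hA.source_unit _ h).symm.trans q.2
    rw [arrowAct, fst_eq, hS.act_unit]

theorem pushf_quotMk_apply (hA : D.IsAmpleGroupoid) (hS : S.IsGSpace) (hfree : S.IsFree)
    (f : X → ℤ) (x : X) : pushf S.quotMk f (S.quotMk x) =
      ∑ᶠ g ∈ {g : G | D.source g = S.anchor x}, f (S.act g x) := by
  refine (finsum_mem_eq_of_bijOn (fun g ↦ S.act g x) ⟨?_, ?_, ?_⟩ fun _ _ ↦ rfl).symm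
  · exact fun g hgx ↦ quotMk_arrowAct ⟨(g, x), hgx⟩
  · exact fun g hgx h hhx heq ↦ eq_of_act_eq hA hS hfree hgx hhx heq
  · intro y hy
    obtain ⟨g, hgx, rfl⟩ := (quotMk_eq_iff hA hS).1 (Eq.symm hy)
    exact ⟨g, hgx, rfl⟩

theorem actFun_eq_pushf (hA : D.IsAmpleGroupoid) (hS : S.IsGSpace) (f : G → ℤ) (a : X → ℤ) :
    S.actFun f a = pushf S.arrowAct (pullbackMul f a) := by
  ext x
  have bijOn_fst :
      BijOn Pullback.fst (S.arrowAct ⁻¹' {x}) {g : G | D.range g = S.anchor x} := by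
    refine ⟨?_, ?_, fun g hgx ↦ ?_⟩
    · rintro q rfl
      exact (hS.act_anchor _ _ q.2).symm
    · rintro q rfl q' hact hfst
      refine Subtype.ext (Prod.ext hfst ?_)
      calc q.snd = S.act (D.inv q.fst) (S.arrowAct q) := (act_inv_arrowAct hA hS q).symm
        _ = S.act (D.inv q'.fst) (S.arrowAct q') := by rw [hfst, hact]
        _ = q'.snd := act_inv_arrowAct hA hS q'
    · exact ⟨⟨(g, S.act (D.inv g) x), (anchor_act_inv hA hS hgx).symm⟩, act_act_inv hA hS hgx, rfl⟩
  calc S.actFun f a x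
      = ∑ᶠ g ∈ {g | D.range g = S.anchor x}, f g * a (S.act (D.inv g) x) :=
        finsum_congr fun g ↦ (finsum_eq_if (p := D.range g = S.anchor x)).symm
    _ = pushf S.arrowAct (pullbackMul f a) x := by
        refine (finsum_mem_eq_of_bijOn _ bijOn_fst ?_).symm
        rintro q rfl
        rw [pullbackMul, act_inv_arrowAct hA hS]

section Exchange

variable {U V : Set X}

theorem image_snd_arrowsBetween (hA : D.IsAmpleGroupoid) (hS : S.IsGSpace)
    (hUV : S.quotMk '' U ⊆ S.quotMk '' V) : Pullback.snd '' S.arrowsBetween U V = U := by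
  refine (image_subset_iff.2 inter_subset_left).antisymm fun x hx ↦ ?_
  obtain ⟨y, hy, hyx⟩ := hUV (mem_image_of_mem _ hx)
  obtain ⟨q, rfl, rfl⟩ := exists_arrow_of_quotMk_eq hA hS hyx.symm
  exact ⟨q, ⟨hx, hy⟩, rfl⟩

theorem image_arrowAct_arrowsBetween (hA : D.IsAmpleGroupoid) (hS : S.IsGSpace)
    (hVU : S.quotMk '' V ⊆ S.quotMk '' U) : S.arrowAct '' S.arrowsBetween U V = V := by
  refine (image_subset_iff.2 inter_subset_right).antisymm fun y hy ↦ ?_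
  obtain ⟨x, hx, hxy⟩ := hVU (mem_image_of_mem _ hy)
  obtain ⟨q, rfl, rfl⟩ := exists_arrow_of_quotMk_eq hA hS hxy
  exact ⟨q, ⟨hx, hy⟩, rfl⟩

theorem injOn_snd_arrowsBetween (hA : D.IsAmpleGroupoid) (hS : S.IsGSpace) (hfree : S.IsFree)
    (hV : InjOn S.quotMk V) : InjOn Pullback.snd (S.arrowsBetween U V) := by
  intro q hq q' hq' hsnd
  refine arrow_ext hA hS hfree hsnd (hV hq.2 hq'.2 ?_)
  rw [quotMk_arrowAct, quotMk_arrowAct, hsnd]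

theorem injOn_arrowAct_arrowsBetween (hA : D.IsAmpleGroupoid) (hS : S.IsGSpace)
    (hfree : S.IsFree) (hU : InjOn S.quotMk U) : InjOn S.arrowAct (S.arrowsBetween U V) := by
  intro q hq q' hq' hact
  refine arrow_ext hA hS hfree (hU hq.1 hq'.1 ?_) hact
  rw [← quotMk_arrowAct, ← quotMk_arrowAct, hact]

end Exchange

local instance : TopologicalSpace S.Quot' := S.quotTop

theorem isOpenQuotientMap_quotMk (hA : D.IsAmpleGroupoid) (hS : S.IsGSpace) :
    IsOpenQuotientMap S.quotMk := by
  refine ⟨quotMk_surjective, continuous_coinduced_rng, fun U hU ↦ isOpen_coinduced.2 ?_⟩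
  have saturation_eq : S.quotMk ⁻¹' (S.quotMk '' U) = Pullback.snd '' (S.arrowAct ⁻¹' U) := by
    ext x
    constructor
    · rintro ⟨y, hy, hyx⟩
      obtain ⟨q, rfl, rfl⟩ := exists_arrow_of_quotMk_eq hA hS hyx.symm
      exact ⟨q, hy, rfl⟩
    · rintro ⟨q, hq, rfl⟩
      exact ⟨_, hq, quotMk_arrowAct q⟩
  exact saturation_eq ▸ isOpenMap_pullback_snd hA.etale_source.isOpenMap
    hS.etale_anchor.continuous _ (hU.preimage hS.continuous_act)

theorem t2Space_quot (hA : D.IsAmpleGroupoid) (hS : S.IsGSpace) (hproper : S.IsProper) :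
    T2Space S.Quot' := by
  rw [t2Space_iff_of_isOpenQuotientMap (isOpenQuotientMap_quotMk hA hS)]
  convert hproper.isClosedMap.isClosed_range using 1
  ext ⟨y, x⟩
  constructor
  · intro hyx
    obtain ⟨q, rfl, rfl⟩ := exists_arrow_of_quotMk_eq hA hS (Eq.symm hyx)
    exact ⟨q, rfl⟩
  · rintro ⟨q, hq⟩
    obtain ⟨rfl, rfl⟩ := Prod.ext_iff.1 hq
    exact quotMk_arrowAct q

/-- By properness the orbit equivalence relation carries the quotient topology of the arrow space,
and by freeness its diagonal corresponds to the unit arrows, which form an open set. -/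
theorem isLocallyInjective_quotMk (hA : D.IsAmpleGroupoid) (hS : S.IsGSpace) (hfree : S.IsFree)
    (hproper : S.IsProper) : IsLocallyInjective S.quotMk := by
  let toOrbitPair (q : S.Arrows) : S.quotMk.Pullback S.quotMk :=
    ⟨(S.arrowAct q, q.snd), quotMk_arrowAct q⟩
  have continuous_toOrbitPair : Continuous toOrbitPair := hproper.continuous.subtype_mk _
  have isClosedMap_toOrbitPair : IsClosedMap toOrbitPair :=
    
    (isProperMap_of_comp_of_inj continuous_toOrbitPair continuous_subtype_val hproper
      Subtype.val_injective).isClosedMap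
  have surjective_toOrbitPair : Surjective toOrbitPair := by
    rintro ⟨⟨y, x⟩, hyx⟩
    obtain ⟨q, rfl, rfl⟩ := exists_arrow_of_quotMk_eq hA hS hyx.symm
    exact ⟨q, rfl⟩
  have preimage_diagonal :
      toOrbitPair ⁻¹' S.quotMk.pullbackDiagonal = Pullback.fst ⁻¹' D.unitSpace :=
    ext fun q ↦ arrowAct_eq_snd_iff hA hS hfree
  rw [isLocallyInjective_iff_isOpen_diagonal, ← (isClosedMap_toOrbitPair.isQuotientMap
    continuous_toOrbitPair surjective_toOrbitPair).isOpen_preimage, preimage_diagonal]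
  exact hA.open_unitSpace.preimage (continuous_fst.comp continuous_subtype_val)

theorem isLocalHomeomorph_quotMk (hA : D.IsAmpleGroupoid) (hS : S.IsGSpace) (hfree : S.IsFree)
    (hproper : S.IsProper) : IsLocalHomeomorph S.quotMk :=
  have hquot := isOpenQuotientMap_quotMk hA hS
  isLocalHomeomorph_of_isLocallyInjective hquot.continuous hquot.isOpenMap
    (isLocallyInjective_quotMk hA hS hfree hproper)

theorem prespectralSpace (hA : D.IsAmpleGroupoid) (hS : S.IsGSpace) : PrespectralSpace X :=
  have := hA.prespectralSpace
  prespectralSpace_of_isLocalHomeomorph hS.etale_anchor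

theorem pushf_quotMk_eq_zero_of_mem_coinvRel (hA : D.IsAmpleGroupoid) (hS : S.IsGSpace)
    (hfree : S.IsFree) (hproper : S.IsProper) {c : X → ℤ} (hc : c ∈ S.coinvRel) :
    pushf S.quotMk c = 0 := by
  have := hA.t2
  have := t2Space_quot hA hS hproper
  have hπ := isLocalHomeomorph_quotMk hA hS hfree hproper
  have quotMk_comp_arrowAct : S.quotMk ∘ S.arrowAct = S.quotMk ∘ Pullback.snd :=
    funext quotMk_arrowAct
  suffices S.coinvRel ≤ (pushfHom S.quotMk).ker.map (fiberFinite S.quotMk).subtype by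
    obtain ⟨c, hker, rfl⟩ := this hc
    exact hker
  refine (AddSubgroup.closure_le _).2 ?_
  rintro _ ⟨f, a, hf, ha, rfl⟩
  have hsnd : (pullbackMul f a : S.Arrows → ℤ) ∈ fiberFinite (S.quotMk ∘ Pullback.snd) :=
    pullbackMul_mem_fiberFinite (ccZSub_le_fiberFinite hA.etale_source hf)
      (ccZSub_le_fiberFinite hπ ha)
  have hact : (pullbackMul f a : S.Arrows → ℤ) ∈ fiberFinite (S.quotMk ∘ S.arrowAct) :=
    quotMk_comp_arrowAct ▸ hsnd
  rw [actFun_eq_pushf hA hS, epsFun_eq_pushf]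
  let pushAct : fiberFinite S.quotMk := ⟨_, pushf_mem_fiberFinite hact⟩
  let pushSnd : fiberFinite S.quotMk := ⟨_, pushf_mem_fiberFinite hsnd⟩
  refine ⟨pushAct - pushSnd, (pushfHom S.quotMk).sub_mem_ker_iff.2 ?_, rfl⟩
  calc pushf S.quotMk (pushf S.arrowAct (pullbackMul f a))
      = pushf (S.quotMk ∘ S.arrowAct) (pullbackMul f a) := (pushf_comp hact).symm
    _ = pushf (S.quotMk ∘ Pullback.snd) (pullbackMul f a) := by rw [quotMk_comp_arrowAct]
    _ = pushf S.quotMk (pushf Pullback.snd (pullbackMul f a)) := pushf_comp hsnd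

theorem indicator_sub_indicator_mem_coinvRel [T2Space X] (hA : D.IsAmpleGroupoid)
    (hS : S.IsGSpace) (hfree : S.IsFree) (hproper : S.IsProper) {U V : Set X}
    (hU : IsSlice S.quotMk U) (hV : IsSlice S.quotMk V) (hanchor : InjOn S.anchor U)
    (hUV : S.quotMk '' U = S.quotMk '' V) (n : ℤ) :
    (V.indicator fun _ ↦ n) - (U.indicator fun _ ↦ n) ∈ S.coinvRel := by
  have := hA.t2
  have isCompact_arrows : IsCompact (S.arrowsBetween U V) := by
    convert hproper.isCompact_preimage (hV.isCompact.prod hU.isCompact) using 1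
    exact inter_comm _ _
  have isOpen_arrows : IsOpen (S.arrowsBetween U V) :=
    (hU.isOpen.preimage (continuous_snd.comp continuous_subtype_val)).inter
      (hV.isOpen.preimage hS.continuous_act)
  have hf : ((Pullback.fst '' S.arrowsBetween U V).indicator fun _ ↦ n) ∈ ccZ G :=
    indicator_mem_ccZ
      (isOpenMap_pullback_fst hA.etale_source.continuous hS.etale_anchor.isOpenMap _ isOpen_arrows)
      (isCompact_arrows.image (continuous_fst.comp continuous_subtype_val)) continuous_const
  have ha : (U.indicator fun _ ↦ (1 : ℤ)) ∈ ccZ X :=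
    indicator_mem_ccZ hU.isOpen hU.isCompact continuous_const
  refine AddSubgroup.subset_closure ⟨_, _, hf, ha, ?_⟩
  rw [actFun_eq_pushf hA hS, epsFun_eq_pushf,
    pullbackMul_indicator_fst_image hanchor fun q hq ↦ hq.1,
    pushf_indicator_const (injOn_arrowAct_arrowsBetween hA hS hfree hU.injOn),
    pushf_indicator_const (injOn_snd_arrowsBetween hA hS hfree hV.injOn),
    image_arrowAct_arrowsBetween hA hS hUV.ge, image_snd_arrowsBetween hA hS hUV.le]

theorem mem_coinvRel_iff [T2Space X] (hA : D.IsAmpleGroupoid) (hS : S.IsGSpace)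
    (hfree : S.IsFree) (hproper : S.IsProper) {f : X → ℤ} (hf : f ∈ ccZ X) :
    f ∈ S.coinvRel ↔ pushf S.quotMk f = 0 := by
  refine ⟨pushf_quotMk_eq_zero_of_mem_coinvRel hA hS hfree hproper, ?_⟩
  have := prespectralSpace hA hS
  have := t2Space_quot hA hS hproper
  refine mem_of_pushf_eq_zero (isLocalHomeomorph_quotMk hA hS hfree hproper) (fun x ↦ ?_) hf
  obtain ⟨O, hO, hxO, hanchor⟩ := hS.etale_anchor.isLocallyInjective x
  exact ⟨O, hO.mem_nhds hxO, fun U V hUO hU hV hUV ↦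
    indicator_sub_indicator_mem_coinvRel hA hS hfree hproper hU hV (hanchor.mono hUO) hUV⟩

end GroupoidData.GSpaceData

open GroupoidData.GSpaceData

/-- Let `G` be an ample groupoid and `X` a locally compact Hausdorff space with an étale
anchor map `p : X → G⁰` and a continuous left `G`-action that is free and proper.  Then
there is an isomorphism of abelian groups `ℤ[X]_G ≅ ℤ[G\X]`, induced by the map sending
`f ∈ ℤ[X]` to the function `[x] ↦ ∑_{g ∈ G_{p(x)}} f(g·x)` on the quotient `G\X`. -/
theorem coinvariants_iso_quotient
    {G : Type u} [TopologicalSpace G] (D : GroupoidData G) (hAmple : D.IsAmpleGroupoid)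
    {X : Type v} [TopologicalSpace X] [T2Space X] [LocallyCompactSpace X]
    (S : D.GSpaceData X) (hS : S.IsGSpace) (hfree : S.IsFree) (hproper : S.IsProper) :
    letI : TopologicalSpace S.Quot' := S.quotTop
    ∃ e : S.Coinv ≃+ ↥(ccZSub S.Quot'),
      ∀ (f : X → ℤ) (hf : f ∈ ccZ X) (x : X),
        (e (S.coinvCls f hf) : S.Quot' → ℤ) (Quot.mk S.orbRel x)
          = ∑ᶠ g ∈ {g : G | D.source g = S.anchor x}, f (S.act g x) := by
  let := S.quotTop
  have := prespectralSpace hAmple hS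
  have := t2Space_quot hAmple hS hproper
  have hπ := isLocalHomeomorph_quotMk hAmple hS hfree hproper
  have relations_eq_ker : S.coinvRel.comap (ccZSub X).subtype = (ccZPushHom hπ).ker :=
    AddSubgroup.ext fun f ↦ (mem_coinvRel_iff hAmple hS hfree hproper f.2).trans
      (mem_ker_ccZPushHom hπ f).symm
  refine ⟨(QuotientAddGroup.quotientAddEquivOfEq relations_eq_ker).trans
    (QuotientAddGroup.quotientKerEquivOfSurjective _
      (ccZPushHom_surjective hπ quotMk_surjective)), fun f _ x ↦ ?_⟩
  exact pushf_quotMk_apply hAmple hS hfree f x
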